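/- Let G = (V, E) be a weighted digraph, let G₀ = (V, E₀) be its subgraph with E₀ ⊆ E and the same weights on shared edges, and let F = E ∖ E₀. Let U ⊆ V contain both the tail and the head of every edge of F. Let C ≥ 1 be a real number and let H be a weighted digraph on vertex set U such that dist_H(u, v) ≤ C · dist_{G₀}(u, v) for all u, v ∈ U, and dist_H(u, v) ≤ w(e) for every edge e = uv ∈ F. Then for all s, t ∈ U and every path P = s → t in G, dist_H(s, t) ≤ C · w(P); consequently dist_H(s, t) ≤ C · dist_G(s, t). -/

import Mathlib

/-!
For every walk `P = x → t` of `G` with `t ∈ U`, induction on `P` gives some `y ∈ U` with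
`C · dist_{G₀}(x, y) + dist_H(y, t) ≤ C · w(P)` (`exists_mid_le`): `y` is the place where the
initial `G₀`-segment of the walk ends.  Prepending a `G₀`-edge extends that segment by the triangle
inequality in `G₀`; prepending an edge of `F`, whose endpoints lie in `U`, first converts the
segment into an `H`-distance and then starts a new, empty segment.  When the start of the walk is
in `U`, the remaining segment is converted in the same way, which gives the theorem.
-/

open scoped ENNReal NNReal

/-- `IsWalk E u l v` : the list of vertices `l` is a path (walk) from `u` to `v`
in the digraph with edge set `E`; consecutive vertices must form edges.
A single-vertex list `[u]` is the empty path from `u` to `u`. -/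
def IsWalk {V : Type*} (E : Set (V × V)) (u : V) (l : List V) (v : V) : Prop :=
  l ≠ [] ∧ l.head? = some u ∧ l.getLast? = some v ∧
    l.Chain' (fun a b => (a, b) ∈ E)

/-- The weight (in `[0,∞]`) of a walk given by its vertex list: the sum of the
(nonnegative) weights of the consecutive pairs. -/
noncomputable def walkWeightE {V : Type*} (w : V × V → ℝ≥0) (l : List V) : ℝ≥0∞ :=
  ((l.zip l.tail).map (fun e => (w e : ℝ≥0∞))).sum

/-- The distance from `u` to `v`: the infimum of the weights of all paths
`u → v`; equals `∞` if there is no such path. -/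
noncomputable def eDist {V : Type*} (E : Set (V × V)) (w : V × V → ℝ≥0)
    (u v : V) : ℝ≥0∞ :=
  ⨅ (l : List V) (_ : IsWalk E u l v), walkWeightE w l

theorem isWalk_singleton {V : Type*} {E : Set (V × V)} {u a v : V} :
    IsWalk E u [a] v ↔ a = u ∧ a = v := by
  simp [IsWalk, List.Chain']

theorem isWalk_cons_cons {V : Type*} {E : Set (V × V)} {u a b v : V} {l : List V} :
    IsWalk E u (a :: b :: l) v ↔ a = u ∧ (a, b) ∈ E ∧ IsWalk E b (b :: l) v := by
  simp [IsWalk, List.Chain']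
  tauto

theorem walkWeightE_cons_cons {V : Type*} (w : V × V → ℝ≥0) (a b : V) (l : List V) :
    walkWeightE w (a :: b :: l) = w (a, b) + walkWeightE w (b :: l) := by
  simp [walkWeightE]

theorem eDist_le_walkWeightE {V : Type*} {E : Set (V × V)} (w : V × V → ℝ≥0) {u v : V}
    {l : List V} (h : IsWalk E u l v) : eDist E w u v ≤ walkWeightE w l :=
  iInf₂_le l h

theorem eDist_self {V : Type*} (E : Set (V × V)) (w : V × V → ℝ≥0) (u : V) :
    eDist E w u u = 0 := by
  have h := eDist_le_walkWeightE w (isWalk_singleton (E := E) (u := u).2 ⟨rfl, rfl⟩)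
  simpa [walkWeightE] using h

theorem eDist_le_edge_add {V : Type*} {E : Set (V × V)} (w : V × V → ℝ≥0) {a b : V} (z : V)
    (h : (a, b) ∈ E) : eDist E w a z ≤ w (a, b) + eDist E w b z := by
  conv_rhs => rw [eDist]
  simp only [ENNReal.add_iInf]
  refine le_iInf₂ fun l hl => ?_
  match l, hl with
  | [], hl => exact absurd rfl hl.1
  | c :: l, hl =>
    obtain rfl : c = b := by simpa using hl.2.1
    rw [← walkWeightE_cons_cons]
    exact eDist_le_walkWeightE w (isWalk_cons_cons.2 ⟨rfl, h, hl⟩)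

theorem eDist_le_walkWeightE_add {V : Type*} {E : Set (V × V)} (w : V × V → ℝ≥0) (v z : V)
    (l : List V) : ∀ u, IsWalk E u l v → eDist E w u z ≤ walkWeightE w l + eDist E w v z := by
  induction l with
  | nil => exact fun u h => absurd rfl h.1
  | cons a l ih =>
    intro u h
    cases l with
    | nil =>
      obtain ⟨rfl, rfl⟩ := isWalk_singleton.1 h
      exact le_add_self
    | cons b l =>
      obtain ⟨rfl, hab, hb⟩ := isWalk_cons_cons.1 h
      rw [walkWeightE_cons_cons, add_assoc]
      exact (eDist_le_edge_add w z hab).trans (by gcongr; exact ih b hb)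

theorem eDist_triangle {V : Type*} (E : Set (V × V)) (w : V × V → ℝ≥0) (u v z : V) :
    eDist E w u z ≤ eDist E w u v + eDist E w v z := by
  conv_rhs => enter [1]; rw [eDist]
  simp only [ENNReal.iInf_add]
  exact le_iInf₂ fun l hl => eDist_le_walkWeightE_add w v z l u hl

/-- The induction over a walk `x → t` of `G`: up to some `y ∈ U` the walk is charged to `G₀`, and
from `y` on to `H`.  The start `x` need not lie in `U`, so that the induction can pass through
interior vertices of `G₀`-segments. -/
theorem exists_mid_le {V : Type*} {E E₀ : Set (V × V)} {w : V × V → ℝ≥0}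
    {U : Set V} (hU : ∀ e ∈ E, e ∉ E₀ → e.1 ∈ U ∧ e.2 ∈ U)
    {c : ℝ≥0∞} (hc : 1 ≤ c) {EH : Set (V × V)} {wH : V × V → ℝ≥0}
    (hH₀ : ∀ u ∈ U, ∀ v ∈ U, eDist EH wH u v ≤ c * eDist E₀ w u v)
    (hHF : ∀ e ∈ E, e ∉ E₀ → eDist EH wH e.1 e.2 ≤ (w e : ℝ≥0∞))
    {t : V} (ht : t ∈ U) (l : List V) :
    ∀ x, IsWalk E x l t →
      ∃ y ∈ U, c * eDist E₀ w x y + eDist EH wH y t ≤ c * walkWeightE w l := by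
  induction l with
  | nil => exact fun u h => absurd rfl h.1
  | cons a l ih =>
    intro x h
    cases l with
    | nil =>
      obtain ⟨rfl, rfl⟩ := isWalk_singleton.1 h
      exact ⟨a, ht, by simp [eDist_self]⟩
    | cons b l =>
      obtain ⟨rfl, hab, hb⟩ := isWalk_cons_cons.1 h
      obtain ⟨y, hy, hle⟩ := ih b hb
      rw [walkWeightE_cons_cons, mul_add]
      by_cases h₀ : (a, b) ∈ E₀
      · refine ⟨y, hy, ?_⟩
        calc c * eDist E₀ w a y + eDist EH wH y t
            ≤ c * (w (a, b) + eDist E₀ w b y) + eDist EH wH y t := by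
              gcongr; exact eDist_le_edge_add w y h₀
          _ = c * w (a, b) + (c * eDist E₀ w b y + eDist EH wH y t) := by ring
          _ ≤ _ := by gcongr
      · obtain ⟨ha, hbU⟩ := hU _ hab h₀
        refine ⟨a, ha, ?_⟩
        rw [eDist_self, mul_zero, zero_add]
        calc eDist EH wH a t
            ≤ eDist EH wH a b + eDist EH wH b t := eDist_triangle ..
          _ ≤ eDist EH wH a b + (eDist EH wH b y + eDist EH wH y t) := by
              gcongr; exact eDist_triangle ..
          _ ≤ w (a, b) + (c * eDist E₀ w b y + eDist EH wH y t) := by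
              gcongr
              · exact hHF _ hab h₀
              · exact hH₀ b hbU y hy
          _ ≤ _ := by
              gcongr
              exact le_mul_of_one_le_left' hc

/- `G = (V, E)` with weights `w`; `G₀ = (V, E₀)` is a subgraph (`E₀ ⊆ E`, same
weights); `F = E ∖ E₀` are the newly inserted edges, all with endpoints in `U`;
`H = (U, EH)` (with weights `wH`) is an auxiliary graph on the vertex set `U`
approximating distances of `G₀` within factor `C` and dominated by the weights
of the inserted edges `F`. -/
theorem dense_apsp_graph_accuracy {V : Type*} [Fintype V]
    (E E₀ : Set (V × V)) (hE₀ : E₀ ⊆ E) (w : V × V → ℝ≥0)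
    (U : Set V) (hU : ∀ e ∈ E, e ∉ E₀ → e.1 ∈ U ∧ e.2 ∈ U)
    (C : ℝ) (hC : 1 ≤ C)
    (EH : Set (V × V)) (hEH : ∀ e ∈ EH, e.1 ∈ U ∧ e.2 ∈ U) (wH : V × V → ℝ≥0)
    (hH₀ : ∀ u ∈ U, ∀ v ∈ U,
      eDist EH wH u v ≤ ENNReal.ofReal C * eDist E₀ w u v)
    (hHF : ∀ e ∈ E, e ∉ E₀ → eDist EH wH e.1 e.2 ≤ (w e : ℝ≥0∞)) :
    ∀ s ∈ U, ∀ t ∈ U,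
      (∀ l : List V, IsWalk E s l t →
        eDist EH wH s t ≤ ENNReal.ofReal C * walkWeightE w l) ∧
      eDist EH wH s t ≤ ENNReal.ofReal C * eDist E w s t := by
  intro s hs t ht
  have hc : 1 ≤ ENNReal.ofReal C := by simpa using hC
  have key : ∀ l : List V, IsWalk E s l t →
      eDist EH wH s t ≤ ENNReal.ofReal C * walkWeightE w l := by
    intro l hl
    obtain ⟨y, hy, hle⟩ := exists_mid_le hU hc hH₀ hHF ht l s hl
    calc eDist EH wH s t
        ≤ eDist EH wH s y + eDist EH wH y t := eDist_triangle ..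
      _ ≤ ENNReal.ofReal C * eDist E₀ w s y + eDist EH wH y t := by
          gcongr; exact hH₀ s hs y hy
      _ ≤ _ := hle
  refine ⟨key, ?_⟩
  -- `C` is finite and nonzero, so multiplication by it commutes with the infimum over walks.
  have hc0 : ENNReal.ofReal C ≠ 0 := (zero_lt_one.trans_le hc).ne'
  conv_rhs => rw [eDist]
  simp only [ENNReal.mul_iInf_of_ne hc0 ENNReal.ofReal_ne_top]
  exact le_iInf₂ key
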